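/- Let n and k be positive integers with k > ⌈2n/3⌉. If G is a connected simple graph on n vertices with dissociation number k that attains the minimum spectral radius among all connected simple graphs on n vertices with dissociation number k, then G is a tree (i.e., G is connected and acyclic). -/

import Mathlib

/-- `S` is a dissociation set of `G`: the subgraph induced by `S` has maximum degree ≤ 1. -/
def IsDissocSet {V : Type} (G : SimpleGraph V) (S : Set V) : Prop :=
  ∀ v ∈ S, ({u ∈ S | G.Adj v u}).ncard ≤ 1

/-- The dissociation number of `G`: the maximum cardinality of a dissociation set. -/
noncomputable def dissNum {V : Type} [Fintype V] (G : SimpleGraph V) : ℕ :=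
  sSup {k | ∃ S : Set V, IsDissocSet G S ∧ S.ncard = k}

open scoped Classical in
/-- The (real) adjacency matrix of a simple graph. -/
noncomputable def adjMat {V : Type} [Fintype V] (G : SimpleGraph V) : Matrix V V ℝ :=
  Matrix.of fun i j => if G.Adj i j then 1 else 0

/-- The spectral radius of a simple graph: the largest eigenvalue of its adjacency matrix. -/
noncomputable def specRad {V : Type} [Fintype V] (G : SimpleGraph V) : ℝ :=
  sSup {t : ℝ | ∃ v : V → ℝ, v ≠ 0 ∧ (adjMat G).mulVec v = t • v}

section Spectral
open Matrix

variable {V : Type} [Fintype V]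

/-- The quadratic form of the adjacency matrix. -/
noncomputable def quadForm (G : SimpleGraph V) (x : V → ℝ) : ℝ :=
  ∑ i, ∑ j, adjMat G i j * x i * x j

lemma quadForm_eq (G : SimpleGraph V) (x : V → ℝ) :
    quadForm G x = x ⬝ᵥ (adjMat G).mulVec x := by
  simp only [quadForm, dotProduct, mulVec, Finset.mul_sum]
  exact Finset.sum_congr rfl fun i _ => Finset.sum_congr rfl fun j _ => by ring

lemma adjMat_congr {W : Type} [Fintype W] (G : SimpleGraph V) (H : SimpleGraph W) {i j : V}
    {k l : W} (h : G.Adj i j ↔ H.Adj k l) : adjMat G i j = adjMat H k l := by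
  by_cases h1 : G.Adj i j
  · have h2 := h.1 h1
    simp [adjMat, h1, h2]
  · have h2 : ¬ H.Adj k l := fun h2 => h1 (h.2 h2)
    simp [adjMat, h1, h2]

lemma adjMat_herm (G : SimpleGraph V) : (adjMat G).IsHermitian := by
  ext i j
  simpa using adjMat_congr G G (G.adj_comm j i)

lemma adjMat_nonneg (G : SimpleGraph V) (i j : V) : 0 ≤ adjMat G i j := by
  simp only [adjMat, of_apply]
  split_ifs <;> norm_num

lemma eig_finite (G : SimpleGraph V) :
    {t : ℝ | ∃ v : V → ℝ, v ≠ 0 ∧ (adjMat G).mulVec v = t • v}.Finite := by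
  classical
  refine (Module.End.finite_hasEigenvalue (Matrix.toLin' (adjMat G))).subset ?_
  rintro t ⟨v, hv, h⟩
  exact Module.End.hasEigenvalue_of_hasEigenvector
    (Module.End.hasEigenvector_iff.2 ⟨Module.End.mem_eigenspace_iff.2 (by simpa using h), hv⟩)

lemma specRad_mem [Nonempty V] (G : SimpleGraph V) :
    ∃ v : V → ℝ, v ≠ 0 ∧ (adjMat G).mulVec v = specRad G • v := by
  classical
  have hne : {t : ℝ | ∃ v : V → ℝ, v ≠ 0 ∧ (adjMat G).mulVec v = t • v}.Nonempty := by
    obtain ⟨j⟩ := ‹Nonempty V›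
    refine ⟨(adjMat_herm G).eigenvalues j, ((adjMat_herm G).eigenvectorBasis j).ofLp, ?_,
      (adjMat_herm G).mulVec_eigenvectorBasis j⟩
    intro h
    have h2 := (adjMat_herm G).eigenvectorBasis.toBasis.ne_zero j
    apply h2
    rw [OrthonormalBasis.coe_toBasis]
    ext i
    exact congrFun h i
  exact hne.csSup_mem (eig_finite G)

open scoped Classical in
lemma psd (G : SimpleGraph V) : (specRad G • (1 : Matrix V V ℝ) - adjMat G).PosSemidef := by
  have hH : (specRad G • (1 : Matrix V V ℝ) - adjMat G).IsHermitian := by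
    refine IsHermitian.sub ?_ (adjMat_herm G)
    ext i j
    simp [Matrix.one_apply, eq_comm]
  rw [hH.posSemidef_iff_eigenvalues_nonneg]
  intro j
  have h := hH.mulVec_eigenvectorBasis j
  set v := (hH.eigenvectorBasis j).ofLp with hv
  have hv0 : v ≠ 0 := by
    intro h
    have h2 := hH.eigenvectorBasis.toBasis.ne_zero j
    apply h2
    rw [OrthonormalBasis.coe_toBasis]
    ext i
    exact congrFun h i
  have : specRad G - hH.eigenvalues j ≤ specRad G := by
    refine le_csSup (eig_finite G).bddAbove ⟨v, hv0, ?_⟩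
    rw [sub_smul, ← h, sub_mulVec, smul_mulVec, one_mulVec]
    abel
  simpa using this

lemma psd_form (G : SimpleGraph V) (x : V → ℝ) [DecidableEq V] :
    star x ⬝ᵥ (specRad G • (1 : Matrix V V ℝ) - adjMat G).mulVec x
      = specRad G * (x ⬝ᵥ x) - quadForm G x := by
  rw [quadForm_eq, sub_mulVec, dotProduct_sub, smul_mulVec, one_mulVec, dotProduct_smul]
  simp

lemma quadForm_le (G : SimpleGraph V) (x : V → ℝ) :
    quadForm G x ≤ specRad G * (x ⬝ᵥ x) := by
  classical
  have := (psd G).dotProduct_mulVec_nonneg x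
  have h2 := psd_form G x
  rw [h2] at this
  linarith

lemma eig_of_quadForm_eq (G : SimpleGraph V) (x : V → ℝ)
    (h : quadForm G x = specRad G * (x ⬝ᵥ x)) : (adjMat G).mulVec x = specRad G • x := by
  classical
  have h1 := ((psd G).dotProduct_mulVec_zero_iff x)
  have h2 := psd_form G x
  rw [h2, h, sub_self, sub_mulVec, smul_mulVec, one_mulVec] at h1
  exact (sub_eq_zero.1 (h1.1 rfl)).symm

lemma quadForm_of_eig (G : SimpleGraph V) (x : V → ℝ)
    (h : (adjMat G).mulVec x = specRad G • x) : quadForm G x = specRad G * (x ⬝ᵥ x) := by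
  rw [quadForm_eq, h, dotProduct_smul, smul_eq_mul]

lemma exists_perron (G : SimpleGraph V) (hG : G.Connected) :
    ∃ x : V → ℝ, (∀ i, 0 < x i) ∧ (adjMat G).mulVec x = specRad G • x := by
  classical
  have := hG.nonempty
  obtain ⟨v, hv0, hv⟩ := specRad_mem G
  set x : V → ℝ := fun i => |v i| with hx
  have hxx : x ⬝ᵥ x = v ⬝ᵥ v := by simp [dotProduct, hx]
  have hq : quadForm G v ≤ quadForm G x := by
    refine Finset.sum_le_sum fun i _ => Finset.sum_le_sum fun j _ => ?_
    rw [mul_assoc, mul_assoc]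
    refine mul_le_mul_of_nonneg_left ?_ (adjMat_nonneg G i j)
    simp only [hx, ← abs_mul]
    exact le_abs_self _
  have hxe : (adjMat G).mulVec x = specRad G • x := by
    apply eig_of_quadForm_eq
    apply le_antisymm (quadForm_le G x)
    rw [hxx, ← quadForm_of_eig G v hv]
    exact hq
  have hx0 : ∀ i, 0 ≤ x i := fun i => abs_nonneg _
  refine ⟨x, ?_, hxe⟩
  have step : ∀ i j, G.Adj i j → x i = 0 → x j = 0 := by
    intro i j hij hi
    have h := congrFun hxe i
    simp only [mulVec, dotProduct, Pi.smul_apply, hi, smul_zero] at h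
    rw [Finset.sum_eq_zero_iff_of_nonneg
      (fun j _ => mul_nonneg (adjMat_nonneg G i j) (hx0 j))] at h
    have := h j (Finset.mem_univ _)
    simpa [adjMat, hij] using this
  have walk : ∀ i j, G.Reachable i j → x i = 0 → x j = 0 := by
    rintro i j ⟨p⟩
    induction p with
    | nil => exact id
    | cons hadj p ih => exact fun h => ih (step _ _ hadj h)
  intro i
  refine lt_of_le_of_ne (hx0 i) fun h => hv0 ?_
  ext j
  have := walk i j (hG.preconnected i j) h.symm
  simpa [hx] using this

lemma specRad_lt_of_quadForm_lt (G H : SimpleGraph V) (x y : V → ℝ) (hx : ∀ i, 0 < x i)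
    [Nonempty V]
    (hxe : (adjMat H).mulVec x = specRad H • x) (hxy : y ⬝ᵥ y = x ⬝ᵥ x)
    (hlt : quadForm H x < quadForm G y) : specRad H < specRad G := by
  have h1 := quadForm_of_eig H x hxe
  have h2 := quadForm_le G y
  have h3 : 0 < x ⬝ᵥ x := by
    refine Finset.sum_pos (fun i _ => mul_pos (hx i) (hx i)) Finset.univ_nonempty
  rw [hxy] at h2
  by_contra hcon
  push Not at hcon
  nlinarith

lemma quadForm_diff [DecidableEq V] (G H : SimpleGraph V) (R : Finset V) (u v : V)
    (x : V → ℝ)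
    (h : ∀ i j, adjMat G i j - adjMat H i j =
      (if j ∈ R then (1 : ℝ) else 0) * ((if i = u then 1 else 0) - (if i = v then 1 else 0)) +
      (if i ∈ R then (1 : ℝ) else 0) * ((if j = u then 1 else 0) - (if j = v then 1 else 0))) :
    quadForm G x - quadForm H x = 2 * (∑ r ∈ R, x r) * (x u - x v) := by
  have e1 : quadForm G x - quadForm H x = ∑ i, ∑ j, (adjMat G i j - adjMat H i j) * x i * x j := by
    simp only [quadForm, ← Finset.sum_sub_distrib]
    exact Finset.sum_congr rfl fun i _ => Finset.sum_congr rfl fun j _ => by ring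
  have hR : ∑ r ∈ R, x r = ∑ j, (if j ∈ R then (1 : ℝ) else 0) * x j := by
    simp
  have hU : x u - x v =
      ∑ j, ((if j = u then (1:ℝ) else 0) - (if j = v then 1 else 0)) * x j := by
    simp [sub_mul, Finset.sum_sub_distrib]
  have e2 : ∑ i, ∑ j, (adjMat G i j - adjMat H i j) * x i * x j =
      (∑ i, ((if i = u then (1:ℝ) else 0) - (if i = v then 1 else 0)) * x i) *
        (∑ j, (if j ∈ R then (1 : ℝ) else 0) * x j) +
      (∑ j, (if j ∈ R then (1 : ℝ) else 0) * x j) *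
      (∑ i, ((if i = u then (1:ℝ) else 0) - (if i = v then 1 else 0)) * x i) := by
    rw [Finset.sum_mul_sum, Finset.sum_mul_sum, ← Finset.sum_add_distrib]
    refine Finset.sum_congr rfl fun i _ => ?_
    rw [← Finset.sum_add_distrib]
    refine Finset.sum_congr rfl fun j _ => ?_
    rw [h]; ring
  rw [e1, e2, ← hR, ← hU]; ring

lemma quadForm_comap (G : SimpleGraph V) (e : Equiv.Perm V) (x : V → ℝ) :
    quadForm (G.comap e) x = quadForm G (x ∘ e.symm) := by
  unfold quadForm
  rw [← Equiv.sum_comp e (fun i => ∑ j, adjMat G i j * (x ∘ e.symm) i * (x ∘ e.symm) j)]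
  refine Finset.sum_congr rfl fun i _ => ?_
  rw [← Equiv.sum_comp e (fun j => adjMat G (e i) j * (x ∘ e.symm) (e i) * (x ∘ e.symm) j)]
  refine Finset.sum_congr rfl fun j _ => ?_
  rw [adjMat_congr (G.comap e) G (i := i) (j := j) (k := e i) (l := e j) Iff.rfl]
  simp

lemma specRad_iso {W : Type} [Fintype W] (G : SimpleGraph V) (H : SimpleGraph W) (e : G ≃g H) :
    specRad G = specRad H := by
  unfold specRad
  congr 1
  ext t
  constructor
  · rintro ⟨v, hv, h⟩
    refine ⟨v ∘ e.symm, ?_, ?_⟩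
    · intro h0; apply hv; ext i
      simpa using congrFun h0 (e i)
    · ext i
      have := congrFun h (e.symm i)
      simp only [mulVec, dotProduct, Pi.smul_apply, Function.comp] at this ⊢
      rw [← this, ← Equiv.sum_comp e.toEquiv]
      refine Finset.sum_congr rfl fun j _ => ?_
      have : H.Adj i (e j) ↔ G.Adj (e.symm i) j := by
        rw [← e.map_adj_iff]; simp
      rw [show e.toEquiv j = e j from rfl, adjMat_congr _ _ this]; simp
  · rintro ⟨v, hv, h⟩
    refine ⟨v ∘ e, ?_, ?_⟩
    · intro h0; apply hv; ext i
      simpa using congrFun h0 (e.symm i)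
    · ext i
      have := congrFun h (e i)
      simp only [mulVec, dotProduct, Pi.smul_apply, Function.comp] at this ⊢
      rw [← this, ← Equiv.sum_comp e.toEquiv]
      refine Finset.sum_congr rfl fun j _ => ?_
      rw [show e.toEquiv j = e j from rfl, adjMat_congr _ _ (e.map_adj_iff (v := i) (w := j))]

end Spectral

section Diss

variable {V : Type} [Fintype V]

lemma diss_bdd (G : SimpleGraph V) :
    BddAbove {k | ∃ S : Set V, IsDissocSet G S ∧ S.ncard = k} := by
  refine ⟨Fintype.card V, ?_⟩
  rintro k ⟨S, -, rfl⟩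
  rw [← Nat.card_eq_fintype_card, ← Set.ncard_univ]
  exact Set.ncard_le_ncard (Set.subset_univ S) (Set.toFinite _)

lemma le_dissNum (G : SimpleGraph V) {S : Set V} (h : IsDissocSet G S) : S.ncard ≤ dissNum G :=
  le_csSup (diss_bdd G) ⟨S, h, rfl⟩

lemma exists_dissNum (G : SimpleGraph V) : ∃ S : Set V, IsDissocSet G S ∧ S.ncard = dissNum G :=
  Nat.sSup_mem (s := {k | ∃ S : Set V, IsDissocSet G S ∧ S.ncard = k})
    ⟨0, ∅, by simp [IsDissocSet], by simp⟩ (diss_bdd G)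

lemma dissNum_le_card (G : SimpleGraph V) : dissNum G ≤ Fintype.card V := by
  obtain ⟨S, -, h⟩ := exists_dissNum G
  rw [← h, ← Nat.card_eq_fintype_card, ← Set.ncard_univ]
  exact Set.ncard_le_ncard (Set.subset_univ S) (Set.toFinite _)

lemma IsDissocSet.anti {G H : SimpleGraph V} {S S' : Set V} (h : IsDissocSet G S)
    (hS : S' ⊆ S) (hadj : ∀ a ∈ S', ∀ b ∈ S', H.Adj a b → G.Adj a b) : IsDissocSet H S' := by
  intro v hv
  refine le_trans (Set.ncard_le_ncard ?_ (Set.toFinite _)) (h v (hS hv))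
  rintro u ⟨hu, hvu⟩
  exact ⟨hS hu, hadj v hv u hu hvu⟩

lemma dissNum_le_of_iso {W : Type} [Fintype W] {G : SimpleGraph V} {H : SimpleGraph W}
    (e : G ≃g H) : dissNum G ≤ dissNum H := by
  obtain ⟨S, hS, h⟩ := exists_dissNum G
  rw [← h, ← Set.ncard_image_of_injective S e.injective]
  apply le_dissNum
  rintro _ ⟨v, hv, rfl⟩
  refine le_trans ?_ (hS v hv)
  rw [← Set.ncard_image_of_injective _ e.injective]
  refine Set.ncard_le_ncard ?_ (Set.toFinite _)
  rintro _ ⟨⟨u, hu, rfl⟩, hvu⟩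
  exact ⟨u, ⟨hu, (e.map_adj_iff).1 hvu⟩, rfl⟩

lemma dissNum_iso {W : Type} [Fintype W] {G : SimpleGraph V} {H : SimpleGraph W}
    (e : G ≃g H) : dissNum G = dissNum H :=
  le_antisymm (dissNum_le_of_iso e) (dissNum_le_of_iso e.symm)

lemma count_bound (N : ℕ) : ∀ (P : ℕ → Prop) [DecidablePred P],
    (∀ i, i + 2 < N → ¬ (P i ∧ P (i + 1) ∧ P (i + 2))) → Nat.count P N ≤ (2 * N + 2) / 3 := by
  induction N using Nat.strong_induction_on with
  | _ N ih =>
    intro P _ h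
    by_cases hN : N < 3
    · have := Nat.count_le (p := P) (n := N)
      omega
    · obtain ⟨M, rfl⟩ : ∃ M, N = M + 3 := ⟨N - 3, by omega⟩
      have h1 := ih M (by omega) P (fun i hi => h i (by omega))
      have h2 := h M (by omega)
      have h3 : Nat.count P (M + 3) ≤ Nat.count P M + 2 := by
        simp only [Nat.count_succ]
        split_ifs <;> first | omega | tauto
      omega

/-- A graph whose vertices can be listed along a walk has a small dissociation number. -/
lemma dissNum_path (G : SimpleGraph V) (m : ℕ) (f : ℕ → V)
    (hinj : ∀ a ≤ m, ∀ b ≤ m, f a = f b → a = b)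
    (hadj : ∀ a < m, G.Adj (f a) (f (a + 1)))
    (hsurj : ∀ x, ∃ a ≤ m, f a = x) :
    dissNum G ≤ (2 * Fintype.card V + 2) / 3 := by
  classical
  have hcard : m + 1 ≤ Fintype.card V := by
    have := Finset.card_le_univ ((Finset.range (m+1)).image f)
    rw [Finset.card_image_of_injOn, Finset.card_range] at this
    · exact this
    · intro a ha b hb h
      simp at ha hb
      exact hinj a (by omega) b (by omega) h
  obtain ⟨S, hS, h⟩ := exists_dissNum G
  have h1 : S.ncard ≤ Nat.count (fun a => f a ∈ S) (m + 1) := by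
    rw [Nat.count_eq_card_filter_range, ← Set.ncard_coe_finset]
    have : S ⊆ f '' ((Finset.range (m+1)).filter (fun a => f a ∈ S) : Finset ℕ) := by
      intro x hx
      obtain ⟨a, ha, rfl⟩ := hsurj x
      exact ⟨a, by simp; exact ⟨by omega, hx⟩, rfl⟩
    exact (Set.ncard_le_ncard this (Set.toFinite _)).trans
      (Set.ncard_image_le (Finset.finite_toSet _))
  have h2 := count_bound (m + 1) (fun a => f a ∈ S) (by
    rintro i hi ⟨p0, p1, p2⟩
    have h3 := hS _ p1
    rw [Set.ncard_le_one (Set.toFinite _)] at h3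
    have := h3 (f i) ⟨p0, (hadj i (by omega)).symm⟩ (f (i + 2)) ⟨p2, hadj (i + 1) (by omega)⟩
    have := hinj i (by omega) (i + 2) (by omega) this
    omega)
  omega

end Diss

set_option linter.unusedSectionVars false

section Surgery
open Matrix

variable {V : Type} [Fintype V]

/-- Deleting an edge strictly decreases the spectral radius if the result is connected. -/
lemma specRad_deleteEdge (G : SimpleGraph V) {a b : V} (hab : G.Adj a b)
    (hc : (G.deleteEdges {s(a, b)}).Connected) :
    specRad (G.deleteEdges {s(a, b)}) < specRad G := by
  classical
  have := hc.nonempty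
  obtain ⟨x, hx, hxe⟩ := exists_perron _ hc
  refine specRad_lt_of_quadForm_lt _ _ x x hx hxe rfl ?_
  have hle : ∀ i j, adjMat (G.deleteEdges {s(a, b)}) i j ≤ adjMat G i j := by
    intro i j
    by_cases h : (G.deleteEdges {s(a, b)}).Adj i j
    · have h' : G.Adj i j := SimpleGraph.deleteEdges_le _ h
      simp only [adjMat, of_apply, if_pos h, if_pos h', le_refl]
    · simp only [adjMat, of_apply, if_neg h]
      split_ifs <;> norm_num
  have hle2 : ∀ i j, adjMat (G.deleteEdges {s(a, b)}) i j * x i * x j ≤ adjMat G i j * x i * x j :=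
    fun i j => mul_le_mul_of_nonneg_right
      (mul_le_mul_of_nonneg_right (hle i j) (hx i).le) (hx j).le
  refine Finset.sum_lt_sum (fun i _ => Finset.sum_le_sum fun j _ => hle2 i j)
    ⟨a, Finset.mem_univ _, Finset.sum_lt_sum (fun j _ => hle2 a j) ⟨b, Finset.mem_univ _, ?_⟩⟩
  have h0 : ¬ (G.deleteEdges {s(a, b)}).Adj a b := by simp
  simp only [adjMat, of_apply, if_neg h0, if_pos hab]
  have := mul_pos (hx a) (hx b)
  linarith

/-- Replace the edge `v w` by the edge `u w`. -/
def moveEdge (G : SimpleGraph V) (v u w : V) (huw : u ≠ w) : SimpleGraph V where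
  Adj i j := (G.Adj i j ∧ ¬ (i = v ∧ j = w) ∧ ¬ (i = w ∧ j = v)) ∨
    (i = u ∧ j = w) ∨ (i = w ∧ j = u)
  symm := ⟨by
    rintro i j (⟨h, h1, h2⟩ | h | h)
    · exact Or.inl ⟨h.symm, fun h => h2 ⟨h.2, h.1⟩, fun h => h1 ⟨h.2, h.1⟩⟩
    · exact Or.inr (Or.inr ⟨h.2, h.1⟩)
    · exact Or.inr (Or.inl ⟨h.2, h.1⟩)⟩
  loopless := ⟨by
    rintro i (⟨h, -⟩ | h | h)
    · exact G.loopless.irrefl i h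
    · exact huw (h.1.symm.trans h.2)
    · exact huw (h.2.symm.trans h.1)⟩

lemma moveEdge_quadForm (G : SimpleGraph V) (v u w : V) (huw : u ≠ w) (huv : u ≠ v) (hvw : v ≠ w)
    (hnuw : ¬ G.Adj u w) (hadj : G.Adj v w) (x : V → ℝ) :
    quadForm G x - quadForm (moveEdge G v u w huw) x
      = 2 * (∑ r ∈ {w}, x r) * (x v - x u) := by
  classical
  apply quadForm_diff
  have side : ∀ j, adjMat G w j - adjMat (moveEdge G v u w huw) w j =
      (if j = v then (1 : ℝ) else 0) - (if j = u then 1 else 0) := by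
    intro j
    have e : (moveEdge G v u w huw).Adj w j ↔ ((G.Adj w j ∧ ¬ (w = v ∧ j = w) ∧
      ¬ (w = w ∧ j = v)) ∨ (w = u ∧ j = w) ∨ (w = w ∧ j = u)) := Iff.rfl
    have hnwu : ¬ G.Adj w u := fun h => hnuw h.symm
    have hwv := hadj.symm
    simp only [adjMat, of_apply, e]
    by_cases h1 : j = v
    · subst h1
      simp [hwv, huv.symm, hvw.symm, huw.symm]
    · by_cases h2 : j = u
      · subst h2
        simp [hnwu, h1]
      · simp [h1, h2, hvw.symm, huw.symm]
  intro i j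
  by_cases hi : i = w
  · subst hi
    rw [side j]
    simp [huw.symm, hvw.symm]
  · by_cases hj : j = w
    · subst hj
      rw [adjMat_congr _ _ (G.adj_comm i j),
        adjMat_congr _ _ ((moveEdge G v u j huw).adj_comm i j), side i]
      simp [huw.symm, hvw.symm]
    · have : G.Adj i j ↔ (moveEdge G v u w huw).Adj i j := by
        change _ ↔ ((G.Adj i j ∧ ¬ (i = v ∧ j = w) ∧
          ¬ (i = w ∧ j = v)) ∨ (i = u ∧ j = w) ∨ (i = w ∧ j = u))
        simp [hi, hj]
      rw [adjMat_congr _ _ this]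
      simp [hi, hj]

/-- The reversal of a pendant path. -/
lemma exists_reversal (m : ℕ) (f : ℕ → V) (hinj : ∀ a ≤ m, ∀ b ≤ m, f a = f b → a = b) :
    ∃ e : Equiv.Perm V, (∀ a ≤ m, e (f a) = f (m - a)) ∧
      (∀ x, (∀ a ≤ m, f a ≠ x) → e x = x) ∧ e.symm = e := by
  classical
  let g : V → V := fun x => if h : ∃ a, a ≤ m ∧ f a = x then f (m - h.choose) else x
  have g1 : ∀ a ≤ m, g (f a) = f (m - a) := by
    intro a ha
    have h : ∃ b, b ≤ m ∧ f b = f a := ⟨a, ha, rfl⟩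
    have h2 := hinj _ h.choose_spec.1 _ ha h.choose_spec.2
    simp only [g, dif_pos h]
    rw [h2]
  have g2 : ∀ x, (∀ a ≤ m, f a ≠ x) → g x = x := by
    intro x hx
    have h : ¬ ∃ b, b ≤ m ∧ f b = x := fun ⟨b, hb, h⟩ => hx b hb h
    simp only [g, dif_neg h]
  have gg : Function.Involutive g := by
    intro x
    by_cases h : ∃ b, b ≤ m ∧ f b = x
    · obtain ⟨a, ha, rfl⟩ := h
      rw [g1 a ha, g1 _ (by omega)]
      congr 1; omega
    · push Not at h
      rw [g2 x h, g2 x h]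
  exact ⟨gg.toPerm, g1, g2, gg.toPerm_symm⟩

variable {G : SimpleGraph V}

lemma moveEdge_connected (hG : G.Connected) {m : ℕ} (f : ℕ → V) {w : V} (huw : f 0 ≠ w)
    (hadj : ∀ a < m, G.Adj (f a) (f (a + 1))) (hw : ∀ a ≤ m, f a ≠ w) :
    (moveEdge G (f m) (f 0) w huw).Connected := by
  have := hG.nonempty
  have hpath : ∀ a ≤ m, (moveEdge G (f m) (f 0) w huw).Reachable (f 0) (f a) := by
    intro a
    induction a with
    | zero => intro _; rfl
    | succ a ih =>
      intro ha
      refine (ih (by omega)).trans (SimpleGraph.Adj.reachable (Or.inl ⟨hadj a (by omega), ?_, ?_⟩))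
      · exact fun h => hw _ ha h.2
      · exact fun h => hw a (by omega) h.1
  have hvw : (moveEdge G (f m) (f 0) w huw).Reachable (f m) w :=
    (hpath m le_rfl).symm.trans (SimpleGraph.Adj.reachable (Or.inr (Or.inl ⟨rfl, rfl⟩)))
  refine SimpleGraph.Connected.mk fun i j => ?_
  obtain ⟨p⟩ := hG.preconnected i j
  induction p with
  | nil => rfl
  | @cons i j k h p ih =>
    refine SimpleGraph.Reachable.trans ?_ ih
    by_cases h1 : i = f m ∧ j = w
    · rw [h1.1, h1.2]; exact hvw
    by_cases h2 : i = w ∧ j = f m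
    · rw [h2.1, h2.2]; exact hvw.symm
    exact SimpleGraph.Adj.reachable (Or.inl ⟨h, h1, h2⟩)

set_option maxHeartbeats 1000000 in
lemma moveEdge_specRad (hG : G.Connected) {m : ℕ} (hm : 1 ≤ m) (f : ℕ → V) {w r : V}
    (huw : f 0 ≠ w)
    (hinj : ∀ a ≤ m, ∀ b ≤ m, f a = f b → a = b)
    (hadj : ∀ a < m, G.Adj (f a) (f (a + 1)))
    (hnb : ∀ a < m, ∀ x, G.Adj (f a) x → ∃ b ≤ m, x = f b ∧ (a = b + 1 ∨ b = a + 1))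
    (hw : ∀ a ≤ m, f a ≠ w) (hvw : G.Adj (f m) w)
    (hr : ∀ a ≤ m, f a ≠ r) (hvr : G.Adj (f m) r) (hrw : r ≠ w) :
    specRad (moveEdge G (f m) (f 0) w huw) < specRad G := by
  classical
  have hc := moveEdge_connected hG f huw hadj hw
  have := hG.nonempty
  obtain ⟨x, hx, hxe⟩ := exists_perron _ hc
  set G' := moveEdge G (f m) (f 0) w huw with hG'
  have huv : f 0 ≠ f m := fun h => by have := hinj 0 (by omega) m le_rfl h; omega
  have hnuw : ¬ G.Adj (f 0) w := fun h => by
    obtain ⟨b, hb, h1, -⟩ := hnb 0 (by omega) w h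
    exact hw b hb h1.symm
  have key1 : quadForm G x - quadForm G' x = 2 * (∑ r ∈ {w}, x r) * (x (f m) - x (f 0)) := by
    exact moveEdge_quadForm G _ _ _ huw huv (hw m le_rfl) hnuw hvw x
  rcases lt_or_ge (x (f m)) (x (f 0)) with hlt | hge
  · obtain ⟨e, e1, e2, e3⟩ := exists_reversal m f hinj
    refine specRad_lt_of_quadForm_lt _ _ x (x ∘ e) hx hxe ?_ ?_
    · exact Equiv.sum_comp e (fun i => x i * x i)
    rw [← e3, ← quadForm_comap]
    let R : Finset V := Finset.univ.filter (fun z => G.Adj (f m) z ∧ z ≠ w ∧ ∀ a ≤ m, f a ≠ z)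
    have key2 : quadForm (G.comap e) x - quadForm G' x
        = 2 * (∑ r ∈ R, x r) * (x (f 0) - x (f m)) := by
      apply quadForm_diff
      have hR : ∀ z, z ∈ R ↔ (G.Adj (f m) z ∧ z ≠ w ∧ ∀ a ≤ m, f a ≠ z) := by
        intro z; simp [R]
      have hpp : ∀ a ≤ m, ∀ b ≤ m, (G.Adj (f a) (f b) ↔ (a = b + 1 ∨ b = a + 1)) := by
        intro a ha b hb
        constructor
        · intro h
          rcases Nat.lt_or_ge a m with h1 | h1
          · obtain ⟨c, hc, h2, h3⟩ := hnb a h1 _ h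
            rwa [hinj b hb c hc h2]
          · rcases Nat.lt_or_ge b m with h1' | h1'
            · obtain ⟨c, hc, h2, h3⟩ := hnb b h1' _ h.symm
              rw [hinj a ha c hc h2]; omega
            · have : a = b := by omega
              subst this
              exact absurd h (G.loopless.irrefl _)
        · rintro (rfl | rfl)
          · exact (hadj b (by omega)).symm
          · exact hadj a (by omega)
      have hpo : ∀ a ≤ m, ∀ z, (∀ b ≤ m, f b ≠ z) → (G.Adj (f a) z ↔ (a = m ∧ (z = w ∨ z ∈ R))) := by
        intro a ha z hz
        rw [hR]
        constructor
        · intro h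
          have : a = m := by
            by_contra hne
            obtain ⟨c, hc, h2, -⟩ := hnb a (by omega) z h
            exact hz c hc h2.symm
          subst this
          by_cases hzw : z = w
          · exact ⟨rfl, Or.inl hzw⟩
          · exact ⟨rfl, Or.inr ⟨h, hzw, hz⟩⟩
        · rintro ⟨rfl, rfl | h⟩
          · exact hvw
          · exact h.1
      have hRf : ∀ a ≤ m, f a ∉ R := fun a ha h => ((hR _).1 h).2.2 a ha rfl
      have hwR : w ∉ R := fun h => ((hR _).1 h).2.1 rfl
      have hff : ∀ a ≤ m, ∀ b ≤ m, (f a = f b ↔ a = b) :=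
        fun a ha b hb => ⟨hinj a ha b hb, fun h => by rw [h]⟩
      -- the mixed case
      have mixed : ∀ a ≤ m, ∀ z, (∀ b ≤ m, f b ≠ z) →
          adjMat (G.comap e) (f a) z - adjMat G' (f a) z =
          (if z ∈ R then (1 : ℝ) else 0) *
            ((if f a = f 0 then 1 else 0) - (if f a = f m then 1 else 0)) := by
        intro a ha z hz
        have hA : (G.comap e).Adj (f a) z ↔ (a = 0 ∧ (z = w ∨ z ∈ R)) := by
          rw [SimpleGraph.comap_adj, e1 a ha, e2 z hz, hpo _ (by omega) z hz]
          constructor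
          · rintro ⟨h1, h2⟩; exact ⟨by omega, h2⟩
          · rintro ⟨h1, h2⟩; exact ⟨by omega, h2⟩
        have hB : G'.Adj (f a) z ↔ ((a = m ∧ z ∈ R) ∨ (a = 0 ∧ z = w)) := by
          have e : G'.Adj (f a) z ↔ ((G.Adj (f a) z ∧ ¬ (f a = f m ∧ z = w) ∧
              ¬ (f a = w ∧ z = f m)) ∨ (f a = f 0 ∧ z = w) ∨ (f a = w ∧ z = f 0)) := Iff.rfl
          rw [e, hpo a ha z hz, hff a ha m le_rfl, hff a ha 0 (by omega)]
          have n1 := hw a ha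
          constructor
          · rintro (⟨⟨h1, h2 | h2⟩, h3, h4⟩ | h | h)
            · exact absurd ⟨h1, h2⟩ h3
            · exact Or.inl ⟨h1, h2⟩
            · exact Or.inr h
            · exact absurd h.1 n1
          · rintro (⟨h1, h2⟩ | h)
            · refine Or.inl ⟨⟨h1, Or.inr h2⟩, ?_, fun h => n1 h.1⟩
              rintro ⟨-, rfl⟩
              exact hwR h2
            · exact Or.inr (Or.inl h)
        simp only [adjMat, of_apply, hA, hB, hff a ha m le_rfl, hff a ha 0 (by omega)]
        by_cases h1 : z = w
        · subst h1
          by_cases h2 : a = 0 <;> simp [h2, hwR]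
        · by_cases h2 : a = 0
          · have : ¬ (0 = m) := by omega
            by_cases h3 : z ∈ R <;> simp [h1, h2, h3, this]
          · by_cases h3 : z ∈ R <;> by_cases h4 : a = m <;> simp [h1, h2, h3, h4] <;> omega
      intro i j
      by_cases hi : ∃ a ≤ m, f a = i
      · obtain ⟨a, ha, rfl⟩ := hi
        by_cases hj : ∃ b ≤ m, f b = j
        · obtain ⟨b, hb, rfl⟩ := hj
          have : (G.comap e).Adj (f a) (f b) ↔ G'.Adj (f a) (f b) := by
            have e' : G'.Adj (f a) (f b) ↔ ((G.Adj (f a) (f b) ∧ ¬ (f a = f m ∧ f b = w) ∧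
              ¬ (f a = w ∧ f b = f m)) ∨ (f a = f 0 ∧ f b = w) ∨ (f a = w ∧ f b = f 0)) := Iff.rfl
            have n1 := hw a ha
            have n2 := hw b hb
            rw [e', SimpleGraph.comap_adj, e1 a ha, e1 b hb, hpp _ (by omega) _ (by omega),
              hpp a ha b hb]
            simp only [n1, n2, and_false, false_and, not_false_eq_true, and_true, or_false]
            omega
          rw [adjMat_congr _ _ this]
          simp [hRf a ha, hRf b hb]
        · push Not at hj
          rw [mixed a ha j hj]
          simp [hRf a ha]
      · push Not at hi
        by_cases hj : ∃ b ≤ m, f b = j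
        · obtain ⟨b, hb, rfl⟩ := hj
          rw [adjMat_congr _ _ ((G.comap e).adj_comm i (f b)),
            adjMat_congr _ _ (G'.adj_comm i (f b)), mixed b hb i hi]
          simp [hRf b hb]
        · push Not at hj
          have : (G.comap e).Adj i j ↔ G'.Adj i j := by
            have e' : G'.Adj i j ↔ ((G.Adj i j ∧ ¬ (i = f m ∧ j = w) ∧
              ¬ (i = w ∧ j = f m)) ∨ (i = f 0 ∧ j = w) ∨ (i = w ∧ j = f 0)) := Iff.rfl
            rw [e', SimpleGraph.comap_adj, e2 i hi, e2 j hj]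
            have n1 := (hi m le_rfl).symm
            have n2 := (hj m le_rfl).symm
            have n3 := (hi 0 (by omega)).symm
            have n4 := (hj 0 (by omega)).symm
            simp [n1, n2, n3, n4]
          rw [adjMat_congr _ _ this]
          have n1 := (hi m le_rfl).symm
          have n2 := (hj m le_rfl).symm
          have n3 := (hi 0 (by omega)).symm
          have n4 := (hj 0 (by omega)).symm
          simp [n1, n2, n3, n4]
    have hRpos : 0 < ∑ r ∈ R, x r :=
      Finset.sum_pos (fun i _ => hx i) ⟨r, by simp [R]; exact ⟨hvr, hrw, hr⟩⟩
    have := mul_pos (mul_pos two_pos hRpos) (sub_pos.2 hlt)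
    linarith
  · have h0 : quadForm G' x ≤ quadForm G x := by
      have : 0 ≤ 2 * (∑ r ∈ {w}, x r) * (x (f m) - x (f 0)) := by
        rw [Finset.sum_singleton]
        exact mul_nonneg (mul_nonneg two_pos.le (hx w).le) (sub_nonneg.2 hge)
      linarith
    have hpos : 0 < x ⬝ᵥ x :=
      Finset.sum_pos (fun i _ => mul_pos (hx i) (hx i)) Finset.univ_nonempty
    have h1 := quadForm_of_eig G' x hxe
    have h2 := quadForm_le G x
    have hle : specRad G' ≤ specRad G := by
      by_contra hcon
      push Not at hcon
      nlinarith
    refine lt_of_le_of_ne hle fun heq => ?_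
    have h3 : (adjMat G).mulVec x = specRad G • x := by
      apply eig_of_quadForm_eq
      rw [heq] at h1
      linarith
    -- compare the eigenvalue equations at the leaf
    have h4 : (adjMat G).mulVec x (f 0) = (adjMat G').mulVec x (f 0) := by
      rw [h3, hxe, heq]
    have h5 : (adjMat G).mulVec x (f 0) < (adjMat G').mulVec x (f 0) := by
      simp only [mulVec, dotProduct]
      have hadj' : ∀ j, G.Adj (f 0) j → G'.Adj (f 0) j := fun j h =>
        Or.inl ⟨h, fun h => huv h.1, fun h => huw h.1⟩
      have hle : ∀ j, adjMat G (f 0) j ≤ adjMat G' (f 0) j := by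
        intro j
        by_cases h : G.Adj (f 0) j
        · simp only [adjMat, of_apply, if_pos h, if_pos (hadj' j h), le_refl]
        · simp only [adjMat, of_apply, if_neg h]
          split_ifs <;> norm_num
      refine Finset.sum_lt_sum (fun j _ => mul_le_mul_of_nonneg_right (hle j) (hx j).le)
        ⟨w, Finset.mem_univ _, ?_⟩
      have : G'.Adj (f 0) w := Or.inr (Or.inl ⟨rfl, rfl⟩)
      simp only [adjMat, of_apply, if_neg hnuw, if_pos this]
      have := hx w
      linarith
    exact absurd h4 h5.ne

lemma moveEdge_diss (v u w : V) (huw : u ≠ w) :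
    dissNum G ≤ dissNum (moveEdge G v u w huw) + 1 := by
  obtain ⟨S, hS, h⟩ := exists_dissNum G
  have h1 : IsDissocSet (moveEdge G v u w huw) (S \ {u}) := by
    refine hS.anti Set.sdiff_subset ?_
    rintro a ⟨ha, hau⟩ b ⟨hb, hbu⟩ (h | h | h)
    · exact h.1
    · exact absurd h.1 hau
    · exact absurd h.2 hbu
  have h2 := le_dissNum _ h1
  have h3 := Set.ncard_le_ncard_sdiff_add_ncard S {u} (Set.toFinite _)
  rw [Set.ncard_singleton] at h3
  omega

end Surgery

section Main

variable {V : Type} [Fintype V]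

/-- `f 0, …, f m` is a pendant path: no inner vertex, nor `f 0`, has further neighbours. -/
def PendPath (G : SimpleGraph V) (m : ℕ) (f : ℕ → V) : Prop :=
  (∀ a ≤ m, ∀ b ≤ m, f a = f b → a = b) ∧ (∀ a < m, G.Adj (f a) (f (a + 1))) ∧
  (∀ a < m, ∀ x, G.Adj (f a) x → ∃ b ≤ m, x = f b ∧ (a = b + 1 ∨ b = a + 1))

lemma pendPath_extend {G : SimpleGraph V} {m : ℕ} {f : ℕ → V} (h : PendPath G m f) {z : V}
    (hz : ∀ a ≤ m, f a ≠ z) (hvz : G.Adj (f m) z)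
    (huniq : ∀ y, (∀ a ≤ m, f a ≠ y) → G.Adj (f m) y → y = z) :
    ∃ f', PendPath G (m + 1) f' := by
  obtain ⟨h1, h2, h3⟩ := h
  let g : ℕ → V := fun a => if a ≤ m then f a else z
  have g1 : ∀ a ≤ m, g a = f a := fun a ha => if_pos ha
  have g2 : g (m + 1) = z := if_neg (by omega)
  refine ⟨g, ?_, ?_, ?_⟩
  · intro a ha b hb hab
    rcases Nat.lt_or_ge m a with h | h
    · obtain rfl : a = m + 1 := by omega
      rcases Nat.lt_or_ge m b with h' | h'
      · omega
      · rw [g2, g1 b h'] at hab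
        exact absurd hab.symm (hz b h')
    · rcases Nat.lt_or_ge m b with h' | h'
      · obtain rfl : b = m + 1 := by omega
        rw [g2, g1 a h] at hab
        exact absurd hab (hz a h)
      · rw [g1 a h, g1 b h'] at hab
        exact h1 a h b h' hab
  · intro a ha
    rcases Nat.lt_or_ge a m with h | h
    · rw [g1 a (by omega), g1 (a + 1) (by omega)]
      exact h2 a h
    · obtain rfl : a = m := by omega
      rw [g1 a le_rfl, g2]
      exact hvz
  · intro a ha x hx
    rw [g1 a (by omega)] at hx
    rcases Nat.lt_or_ge a m with h | h
    · obtain ⟨b, hb, rfl, hab⟩ := h3 a h x hx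
      exact ⟨b, by omega, (g1 b hb).symm, hab⟩
    · obtain rfl : a = m := by omega
      by_cases hc : ∃ c ≤ a, f c = x
      · obtain ⟨c, hc, rfl⟩ := hc
        rcases Nat.lt_or_ge c a with h' | h'
        · obtain ⟨b, hb, hfb, hab⟩ := h3 c h' _ hx.symm
          have := h1 a le_rfl b hb hfb
          exact ⟨c, by omega, (g1 c hc).symm, by omega⟩
        · obtain rfl : c = a := by omega
          exact absurd hx (G.loopless.irrefl _)
      · push Not at hc
        exact ⟨a + 1, le_rfl, by rw [g2]; exact huniq x hc hx, by omega⟩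

/-- A tree with dissociation number above that of the path admits an edge exchange
that decreases the spectral radius. -/
lemma exists_better {G : SimpleGraph V} (hG : G.IsTree)
    (hd : (2 * Fintype.card V + 2) / 3 < dissNum G) :
    ∃ H : SimpleGraph V, H.Connected ∧ dissNum G ≤ dissNum H + 1 ∧ specRad H < specRad G := by
  classical
  by_contra hno
  have hc := hG.connected
  have hnt : Nontrivial V := by
    have := dissNum_le_card G
    exact Fintype.one_lt_card_iff_nontrivial.1 (by omega)
  have hall : ∀ m, ∃ f, PendPath G (m + 1) f := by
    intro m
    induction m with
    | zero =>
      obtain ⟨u, hu⟩ := hG.exists_vert_degree_one_of_nontrivial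
      obtain ⟨z, hz, huz⟩ := SimpleGraph.degree_eq_one_iff_existsUnique_adj.1 hu
      refine pendPath_extend (m := 0) (f := fun _ => u) (z := z) ⟨?_, ?_, ?_⟩ ?_ hz ?_
      · intro a ha b hb _; omega
      · intro a ha; omega
      · intro a ha; omega
      · intro a _; exact hz.ne
      · intro y _ hy; exact huz y hy
    | succ m ih =>
      obtain ⟨f, hf⟩ := ih
      by_cases hz : ∃ z, (∀ a ≤ m + 1, f a ≠ z) ∧ G.Adj (f (m + 1)) z
      · obtain ⟨z, hz, hvz⟩ := hz
        refine pendPath_extend hf hz hvz fun y hy hvy => ?_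
        by_contra hyz
        have huw : f 0 ≠ z := hz 0 (by omega)
        exact hno ⟨moveEdge G (f (m + 1)) (f 0) z huw,
          moveEdge_connected hc f huw hf.2.1 hz, moveEdge_diss _ _ _ _,
          moveEdge_specRad hc (by omega) f huw hf.1 hf.2.1 hf.2.2 hz hvz hy hvy hyz⟩
      · exfalso
        push Not at hz
        have hstep : ∀ i j, G.Adj i j → (∃ a ≤ m + 1, f a = i) → ∃ a ≤ m + 1, f a = j := by
          rintro i j hij ⟨a, ha, rfl⟩
          rcases Nat.lt_or_ge a (m + 1) with h | h
          · obtain ⟨b, hb, h1, -⟩ := hf.2.2 a h j hij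
            exact ⟨b, hb, h1.symm⟩
          · obtain rfl : a = m + 1 := by omega
            by_contra hcon
            push Not at hcon
            exact hz j hcon hij
        have hsurj : ∀ x, ∃ a ≤ m + 1, f a = x := by
          intro x
          obtain ⟨p⟩ := hc.preconnected (f 0) x
          have : ∀ i j, G.Walk i j → (∃ a ≤ m + 1, f a = i) → ∃ a ≤ m + 1, f a = j := by
            intro i j p
            induction p with
            | nil => exact id
            | cons h p ih => exact fun h' => ih (hstep _ _ h h')
          exact this _ _ p ⟨0, by omega, rfl⟩
        have := dissNum_path G (m + 1) f hf.1 hf.2.1 hsurj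
        omega
  obtain ⟨f, hf, -⟩ := hall (Fintype.card V)
  have := Finset.card_le_univ ((Finset.range (Fintype.card V + 2)).image f)
  rw [Finset.card_image_of_injOn, Finset.card_range] at this
  · omega
  · intro a ha b hb h
    simp at ha hb
    exact hf a (by omega) b (by omega) h

lemma isTree_of_min {G : SimpleGraph V} {k : ℕ} (hG : G.Connected) (hk : k ≤ dissNum G)
    (hmin : ∀ H : SimpleGraph V, H.Connected → k ≤ dissNum H → specRad G ≤ specRad H) :
    G.IsTree := by
  refine ⟨hG, ?_⟩
  rw [SimpleGraph.isAcyclic_iff_forall_isBridge]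
  intro e
  induction e using Sym2.ind with
  | _ a b =>
    intro hab
    by_contra hbr
    have hc : (G.deleteEdges {s(a, b)}).Connected := hG.connected_delete_edge_of_not_isBridge hbr
    have h1 := specRad_deleteEdge G (a := a) (b := b) hab hc
    have h2 : dissNum G ≤ dissNum (G.deleteEdges {s(a, b)}) := by
      obtain ⟨S, hS, h⟩ := exists_dissNum G
      rw [← h]
      exact le_dissNum _ (hS.anti subset_rfl fun a _ b _ h => SimpleGraph.deleteEdges_le _ h)
    exact absurd (hmin _ hc (hk.trans h2)) (not_le.2 h1)

end Main

/-- If `k > ⌈2n/3⌉` and a connected graph `G` of order `n` with dissociation number `k`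
attains the minimum spectral radius among all connected graphs of order `n` with
dissociation number `k`, then `G` is a tree.  (Here `⌈2n/3⌉ = (2n+2)/3` in `ℕ`.) -/
theorem minimum_spectral_radius_is_tree
    {n k : ℕ} (hn : 0 < n) (hk : 0 < k) (hceil : (2 * n + 2) / 3 < k)
    {V : Type} [Fintype V] (G : SimpleGraph V)
    (hcard : Fintype.card V = n) (hconn : G.Connected) (hdiss : dissNum G = k)
    (hmin : ∀ H : SimpleGraph (Fin n), H.Connected → dissNum H = k →
      specRad G ≤ specRad H) :
    G.IsTree := by
  subst hcard
  -- the minimality hypothesis on the vertex type itself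
  have hminV : ∀ H : SimpleGraph V, H.Connected → dissNum H = k → specRad G ≤ specRad H := by
    intro H hH hd
    let e := SimpleGraph.Iso.map (Fintype.equivFin V) H
    rw [specRad_iso H _ e]
    exact hmin _ (e.connected_iff.1 hH) (by rw [← dissNum_iso e, hd])
  -- a minimiser among connected graphs with dissociation number at least `k`
  obtain ⟨H, ⟨hHc, hHk⟩, hHmin⟩ := Set.exists_min_image
    {H : SimpleGraph V | H.Connected ∧ k ≤ dissNum H} specRad (Set.toFinite _)
    ⟨G, hconn, hdiss.ge⟩
  have hHtree : H.IsTree := isTree_of_min hHc hHk fun K h1 h2 => hHmin K ⟨h1, h2⟩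
  have hHd : dissNum H = k := by
    by_contra hne
    obtain ⟨K, hK1, hK2, hK3⟩ := exists_better hHtree (by omega)
    exact absurd (hHmin K ⟨hK1, by omega⟩) (not_le.2 hK3)
  exact isTree_of_min hconn hdiss.ge fun K h1 h2 =>
    (hminV H hHc hHd).trans (hHmin K ⟨h1, h2⟩)
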